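/- Let n ≥ 1, m ≥ 1 and s ∈ (0,1), and fix a continuous map g : 𝕊ⁿ → 𝕊^m. For t ∈ [s,1) define m_t := inf{ E_{t,n/s}(v) : v : 𝕊ⁿ → 𝕊^m continuous and homotopic to g } ∈ [0,∞], where E_{t,n/s}(v) := ∫_{𝕊ⁿ}∫_{𝕊ⁿ} |v(x)−v(y)|^{n/s}/|x−y|^{n+t·n/s} dμ(x) dμ(y). Then m_s = lim_{t→s⁺} m_t. -/

import Mathlib

open MeasureTheory
open scoped ENNReal Topology

noncomputable section

/-- The unit sphere `𝕊ᵏ ⊆ ℝ^{k+1}`. -/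
abbrev Sph (k : ℕ) : Type _ := ↥(Metric.sphere (0 : EuclideanSpace ℝ (Fin (k + 1))) 1)

/-- `f` and `g` are homotopic maps. -/
def Homotopic {X Y : Type*} [TopologicalSpace X] [TopologicalSpace Y] (f g : X → Y) : Prop :=
  ∃ H : unitInterval × X → Y, Continuous H ∧ (∀ x, H (0, x) = f x) ∧ (∀ x, H (1, x) = g x)

/-- The energy `E_{t,n/s}(v) = ∫∫ |v(x)-v(y)|^{n/s}/|x-y|^{n+t·n/s} dμ dμ` of a map
`𝕊ⁿ → 𝕊^m`, with `μ` the `n`-dimensional Hausdorff measure on `𝕊ⁿ`. -/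
def sphEnergy (n m : ℕ) (s t : ℝ) (v : Sph n → Sph m) : ℝ≥0∞ :=
  ∫⁻ x, ∫⁻ y,
    ENNReal.ofReal
      (‖(v x : EuclideanSpace ℝ (Fin (m + 1))) - (v y : EuclideanSpace ℝ (Fin (m + 1)))‖
          ^ ((n : ℝ) / s) / dist x y ^ ((n : ℝ) + t * ((n : ℝ) / s)))
    ∂(μH[(n : ℝ)] : Measure (Sph n)) ∂(μH[(n : ℝ)] : Measure (Sph n))

/-- The infimum `m_t` of `E_{t,n/s}` over continuous maps homotopic to `g`. -/
def minEnergy (n m : ℕ) (s : ℝ) (g : Sph n → Sph m) (t : ℝ) : ℝ≥0∞ :=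
  sInf {e : ℝ≥0∞ | ∃ v : Sph n → Sph m, Continuous v ∧ Homotopic v g ∧ e = sphEnergy n m s t v}


/-! ### Geometry -/

lemma normalize_lip {V : Type*} [NormedAddCommGroup V] [InnerProductSpace ℝ V] (a b : V) (r : ℝ)
    (hr : 0 < r) (ha : r ≤ ‖a‖) (hb : r ≤ ‖b‖) :
    ‖‖a‖⁻¹ • a - ‖b‖⁻¹ • b‖ ≤ r⁻¹ * ‖a - b‖ := by
  have ha' : 0 < ‖a‖ := by linarith
  have hb' : 0 < ‖b‖ := by linarith
  have h1 : ‖‖a‖⁻¹ • a - ‖b‖⁻¹ • b‖ ^ 2 * (‖a‖ * ‖b‖) = ‖a - b‖ ^ 2 - (‖a‖ - ‖b‖) ^ 2 := by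
    rw [norm_sub_sq_real, norm_sub_sq_real, norm_smul, norm_smul, inner_smul_left,
      inner_smul_right]
    simp only [norm_inv, norm_norm, map_inv₀, conj_trivial]
    field_simp
    ring
  have h2 : r ^ 2 ≤ ‖a‖ * ‖b‖ := by nlinarith
  have h3 : (r * ‖‖a‖⁻¹ • a - ‖b‖⁻¹ • b‖) ^ 2 ≤ ‖a - b‖ ^ 2 := by
    nlinarith [sq_nonneg (‖a‖ - ‖b‖), sq_nonneg ‖‖a‖⁻¹ • a - ‖b‖⁻¹ • b‖]
  have h4 := abs_le_of_sq_le_sq h3 (norm_nonneg _)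
  rw [inv_mul_eq_div, le_div_iff₀ hr]
  linarith [le_abs_self (r * ‖‖a‖⁻¹ • a - ‖b‖⁻¹ • b‖)]

/-- Normalisation into the sphere. -/
def nrm {k : ℕ} (a : EuclideanSpace ℝ (Fin (k + 1))) (ha : a ≠ 0) : Sph k :=
  ⟨‖a‖⁻¹ • a, by simp [norm_smul, ha]⟩

lemma sph_norm {k : ℕ} (x : Sph k) : ‖(x : EuclideanSpace ℝ (Fin (k + 1)))‖ = 1 := by
  simp

lemma ball_bound_small (n : ℕ) (x : Sph n) (r : ℝ) (hr1 : r ≤ 1) :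
    (μH[(n : ℝ)] : Measure (Sph n)) (Metric.closedBall x r) ≤
      (μH[(n : ℝ)] : Measure (EuclideanSpace ℝ (Fin n))) (Metric.closedBall 0 (2 * r)) := by
  have hx := sph_norm x
  set e : EuclideanSpace ℝ (Fin (n + 1)) := x.1 with he
  have hfr : Module.finrank ℝ (ℝ ∙ e)ᗮ = n := by
    have : Fact (Module.finrank ℝ (EuclideanSpace ℝ (Fin (n + 1))) = n + 1) := ⟨by simp⟩
    exact Submodule.finrank_orthogonal_span_singleton (by rintro h; simp [h] at hx)
  let b := (stdOrthonormalBasis ℝ (ℝ ∙ e)ᗮ).reindex (finCongr hfr)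
  have hort : ∀ y : EuclideanSpace ℝ (Fin n), inner ℝ e ((b.repr.symm y : (ℝ ∙ e)ᗮ) : EuclideanSpace ℝ (Fin (n + 1))) = 0 :=
    fun y => (Submodule.mem_orthogonal_singleton_iff_inner_right.1 (b.repr.symm y).2)
  have hge : ∀ y : EuclideanSpace ℝ (Fin n), 1 ≤ ‖e + ((b.repr.symm y : (ℝ ∙ e)ᗮ) : EuclideanSpace ℝ (Fin (n + 1)))‖ := by
    intro y
    have h := norm_add_sq_real e ((b.repr.symm y : (ℝ ∙ e)ᗮ) : EuclideanSpace ℝ (Fin (n + 1)))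
    rw [hort, hx] at h
    nlinarith [norm_nonneg (e + ((b.repr.symm y : (ℝ ∙ e)ᗮ) : EuclideanSpace ℝ (Fin (n + 1)))), sq_nonneg ‖((b.repr.symm y : (ℝ ∙ e)ᗮ) : EuclideanSpace ℝ (Fin (n + 1)))‖]
  let F : EuclideanSpace ℝ (Fin n) → Sph n := fun y =>
    nrm (e + ((b.repr.symm y : (ℝ ∙ e)ᗮ) : EuclideanSpace ℝ (Fin (n + 1)))) (by
      intro h; have := hge y; rw [h] at this; norm_num at this)
  have hF : LipschitzWith 1 F := by
    refine LipschitzWith.of_dist_le_mul fun y z => ?_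
    rw [Subtype.dist_eq, dist_eq_norm]
    have := normalize_lip _ _ 1 one_pos (hge y) (hge z)
    refine this.trans ?_
    simp only [add_sub_add_left_eq_sub, inv_one, one_mul, NNReal.coe_one]
    rw [← Submodule.coe_sub, ← map_sub, Submodule.norm_coe, LinearIsometryEquiv.norm_map,
      dist_eq_norm]
  have hsub : Metric.closedBall x r ⊆ F '' Metric.closedBall 0 (2 * r) := by
    intro y hy
    have hyn := sph_norm y
    rw [Metric.mem_closedBall, Subtype.dist_eq, dist_eq_norm] at hy
    have h1 := norm_sub_sq_real (y : EuclideanSpace ℝ (Fin (n + 1))) e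
    rw [hyn, hx] at h1
    set c : ℝ := inner ℝ (y : EuclideanSpace ℝ (Fin (n + 1))) e with hc
    have hd0 := norm_nonneg ((y : EuclideanSpace ℝ (Fin (n + 1))) - e)
    have hy' : ‖(y : EuclideanSpace ℝ (Fin (n + 1))) - e‖ ^ 2 ≤ r ^ 2 := by
      exact pow_le_pow_left₀ hd0 hy 2
    have hr0 : 0 ≤ r := hd0.trans hy
    have hc2 : 1 / 2 ≤ c := by nlinarith
    have hc1 : c ≤ 1 := by nlinarith
    have hcpos : 0 < c := by linarith
    have hz : c⁻¹ • (y : EuclideanSpace ℝ (Fin (n + 1))) - e ∈ (ℝ ∙ e)ᗮ := by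
      rw [Submodule.mem_orthogonal_singleton_iff_inner_left, inner_sub_left, inner_smul_left,
        ← hc, real_inner_self_eq_norm_sq, hx]
      simp [hcpos.ne']
    refine ⟨b.repr ⟨_, hz⟩, ?_, ?_⟩
    · rw [mem_closedBall_zero_iff, LinearIsometryEquiv.norm_map, Submodule.coe_norm]
      have h2 := norm_sub_sq_real (c⁻¹ • (y : EuclideanSpace ℝ (Fin (n + 1)))) e
      rw [norm_smul, hyn, hx, inner_smul_left, ← hc] at h2
      simp only [norm_inv, Real.norm_eq_abs, abs_of_pos hcpos, conj_trivial, mul_one] at h2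
      rw [inv_mul_cancel₀ hcpos.ne'] at h2
      have h3 : c⁻¹ ^ 2 ≤ 1 + 8 * (1 - c) := by
        rw [inv_pow, inv_le_iff_one_le_mul₀ (by positivity)]
        nlinarith [mul_nonneg (sub_nonneg.2 hc1) (sub_nonneg.2 hc2), mul_nonneg (mul_nonneg (sub_nonneg.2 hc1) (sub_nonneg.2 hc2)) hcpos.le]
      refine abs_le_of_sq_le_sq' ?_ (by linarith) |>.2
      change ‖c⁻¹ • (y : EuclideanSpace ℝ (Fin (n + 1))) - e‖ ^ 2 ≤ _
      nlinarith
    · apply Subtype.ext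
      simp only [F, nrm, LinearIsometryEquiv.symm_apply_apply, add_sub_cancel]
      rw [norm_smul, hyn]
      simp [smul_smul, abs_of_pos hcpos, hcpos.ne']
  calc _ ≤ _ := measure_mono hsub
    _ ≤ _ := hF.hausdorffMeasure_image_le (by positivity) _
    _ = _ := by simp

lemma haus_ball (n : ℕ) (r : ℝ) (hr : 0 ≤ r) :
    (μH[(n : ℝ)] : Measure (EuclideanSpace ℝ (Fin n))) (Metric.closedBall 0 r) =
      ENNReal.ofReal (r ^ n) *
        (μH[(n : ℝ)] : Measure (EuclideanSpace ℝ (Fin n))) (Metric.closedBall 0 1) := by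
  have h : (μH[(Module.finrank ℝ (EuclideanSpace ℝ (Fin n)) : ℝ)] :
    Measure (EuclideanSpace ℝ (Fin n))) = μH[(n : ℝ)] := by simp
  rw [← h, Measure.addHaar_closedBall' _ _ hr]
  simp

instance sph_finite (n : ℕ) : IsFiniteMeasure (μH[(n : ℝ)] : Measure (Sph n)) := by
  constructor
  refine isCompact_univ.measure_lt_top_of_nhdsWithin fun x _ => ?_
  refine ⟨Metric.closedBall x 1, mem_nhdsWithin_of_mem_nhds (Metric.closedBall_mem_nhds x one_pos), ?_⟩
  refine (ball_bound_small n x 1 le_rfl).trans_lt ?_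
  have h : (μH[(Module.finrank ℝ (EuclideanSpace ℝ (Fin n)) : ℝ)] :
    Measure (EuclideanSpace ℝ (Fin n))) = μH[(n : ℝ)] := by simp
  rw [← h]
  exact (isCompact_closedBall _ _).measure_lt_top

lemma ball_bound (n : ℕ) : ∃ C : ℝ≥0∞, C ≠ ∞ ∧ ∀ (x : Sph n) (r : ℝ), 0 ≤ r →
    (μH[(n : ℝ)] : Measure (Sph n)) (Metric.closedBall x r) ≤ C * ENNReal.ofReal (r ^ n) := by
  set A := (μH[(n : ℝ)] : Measure (EuclideanSpace ℝ (Fin n))) (Metric.closedBall 0 1)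
  have hA : A ≠ ∞ := by
    have h : (μH[(Module.finrank ℝ (EuclideanSpace ℝ (Fin n)) : ℝ)] :
      Measure (EuclideanSpace ℝ (Fin n))) = μH[(n : ℝ)] := by simp
    simp only [A]
    rw [← h]
    exact (isCompact_closedBall _ _).measure_lt_top.ne
  refine ⟨ENNReal.ofReal (2 ^ n) * A + (μH[(n : ℝ)] : Measure (Sph n)) Set.univ, ?_, ?_⟩
  · exact ENNReal.add_ne_top.2 ⟨ENNReal.mul_ne_top ENNReal.ofReal_ne_top hA, measure_ne_top _ _⟩
  intro x r hr
  rcases le_total r 1 with h | h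
  · refine (ball_bound_small n x r h).trans ?_
    rw [haus_ball n _ (by positivity), mul_pow, ENNReal.ofReal_mul (by positivity), add_mul]
    refine le_trans (le_of_eq ?_) le_self_add
    simp only [A]; ring
  · refine (measure_mono (Set.subset_univ _)).trans ?_
    rw [add_mul]
    refine le_trans ?_ le_add_self
    refine le_mul_of_one_le_right (by simp) ?_
    rw [ENNReal.one_le_ofReal]
    exact one_le_pow₀ h

/-! ### Energies of vector valued maps -/

/-- energy of a vector valued map -/
def en (n : ℕ) {V : Type*} [NormedAddCommGroup V] (p a : ℝ) (u : Sph n → V) : ℝ≥0∞ :=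
  ∫⁻ x, ∫⁻ y, ‖u x - u y‖ₑ ^ p * ENNReal.ofReal ((dist x y ^ a)⁻¹)
    ∂(μH[(n : ℝ)] : Measure (Sph n)) ∂(μH[(n : ℝ)] : Measure (Sph n))

lemma sphEnergy_eq (n m : ℕ) (s t : ℝ) (hs : 0 < s) (v : Sph n → Sph m) :
    sphEnergy n m s t v = en n ((n : ℝ) / s) ((n : ℝ) + t * ((n : ℝ) / s))
      (fun x => (v x : EuclideanSpace ℝ (Fin (m + 1)))) := by
  unfold sphEnergy en
  refine lintegral_congr fun x => lintegral_congr fun y => ?_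
  rw [div_eq_mul_inv, ENNReal.ofReal_mul (by positivity), ← ofReal_norm,
    ENNReal.ofReal_rpow_of_nonneg (norm_nonneg _) (by positivity)]

lemma dist_le_two {n : ℕ} (x y : Sph n) : dist x y ≤ 2 := by
  rw [Subtype.dist_eq, dist_eq_norm]
  refine (norm_sub_le _ _).trans ?_
  rw [sph_norm, sph_norm]; norm_num

lemma dyadic (a d : ℝ) (hd : 0 ≤ d) (hd2 : d ≤ 2) :
    ∃ k : ℕ, d ≤ 2 * (1 / 2) ^ k ∧ (d ^ a)⁻¹ ≤ 2 ^ |a| * ((2 : ℝ) ^ a) ^ k := by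
  have h1 : (1 : ℝ) ≤ 2 ^ |a| := Real.one_le_rpow (by norm_num) (abs_nonneg a)
  rcases hd.eq_or_lt with h | h
  · refine ⟨0, by rw [← h]; norm_num, ?_⟩
    rw [← h, pow_zero, mul_one]
    rcases eq_or_ne a 0 with h0 | h0
    · simp [h0]
    · rw [Real.zero_rpow h0, inv_zero]; positivity
  obtain ⟨k, hk1, hk2⟩ := exists_nat_pow_near_of_lt_one (x := d / 2) (y := 1 / 2) (by linarith)
    (by linarith) (by norm_num) (by norm_num)
  refine ⟨k, by linarith, ?_⟩
  set q : ℝ := (1 / 2) ^ k with hq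
  have hqpos : 0 < q := by positivity
  have hq2 : ((2 : ℝ) ^ a) ^ k = (q ^ a)⁻¹ := by
    rw [hq, ← Real.rpow_natCast, ← Real.rpow_natCast, ← Real.rpow_mul (by norm_num),
      ← Real.rpow_mul (by norm_num), one_div, Real.inv_rpow (by norm_num), inv_inv, mul_comm]
  have hθ1 : 1 ≤ d / q := by
    rw [le_div_iff₀ hqpos]; rw [pow_succ] at hk1; linarith
  have hθ2 : d / q ≤ 2 := by
    rw [div_le_iff₀ hqpos]; linarith
  have hd' : d = q * (d / q) := by field_simp
  rw [hq2, hd', Real.mul_rpow hqpos.le (by positivity), mul_inv, mul_comm]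
  refine mul_le_mul_of_nonneg_right ?_ (by positivity)
  rw [← Real.rpow_neg (by positivity)]
  calc (d / q) ^ (-a) ≤ (d / q) ^ |a| := Real.rpow_le_rpow_of_exponent_le hθ1 (neg_le_abs a)
    _ ≤ 2 ^ |a| := Real.rpow_le_rpow (by linarith) hθ2 (abs_nonneg a)

lemma kern_bound (n : ℕ) (a : ℝ) (ha : a < n) : ∃ C : ℝ≥0∞, C ≠ ∞ ∧ ∀ x : Sph n,
    ∫⁻ y, ENNReal.ofReal ((dist x y ^ a)⁻¹) ∂(μH[(n : ℝ)] : Measure (Sph n)) ≤ C := by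
  obtain ⟨C, hC, hball⟩ := ball_bound n
  set ρ : ℝ := 2 ^ a * (1 / 2) ^ n with hρ
  have hρ0 : 0 ≤ ρ := by positivity
  have hρ1 : ρ < 1 := by
    rw [hρ, one_div, inv_pow, ← Real.rpow_natCast, ← Real.rpow_neg (by norm_num),
      ← Real.rpow_add (by norm_num)]
    exact Real.rpow_lt_one_of_one_lt_of_neg (by norm_num) (by linarith)
  refine ⟨C * ENNReal.ofReal (2 ^ |a| * 2 ^ n) * ∑' k : ℕ, ENNReal.ofReal ρ ^ k, ?_, fun x => ?_⟩
  · refine ENNReal.mul_ne_top (ENNReal.mul_ne_top hC ENNReal.ofReal_ne_top) ?_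
    rw [ENNReal.tsum_geometric, ENNReal.inv_ne_top]
    have : ENNReal.ofReal ρ < 1 := by
      rw [← ENNReal.ofReal_one]; exact (ENNReal.ofReal_lt_ofReal_iff one_pos).2 hρ1
    exact (tsub_pos_of_lt this).ne'
  calc _ ≤ ∫⁻ y, ∑' k : ℕ, (Metric.closedBall x (2 * (1 / 2) ^ k)).indicator
        (fun _ => ENNReal.ofReal (2 ^ |a| * ((2 : ℝ) ^ a) ^ k)) y ∂(μH[(n : ℝ)] : Measure (Sph n)) := by
        refine lintegral_mono fun y => ?_
        obtain ⟨k, hk1, hk2⟩ := dyadic a (dist x y) dist_nonneg (dist_le_two x y)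
        refine le_trans ?_ (ENNReal.le_tsum k)
        rw [Set.indicator_of_mem (by rw [Metric.mem_closedBall, dist_comm]; exact hk1)]
        exact ENNReal.ofReal_le_ofReal hk2
    _ = ∑' k : ℕ, ENNReal.ofReal (2 ^ |a| * ((2 : ℝ) ^ a) ^ k) *
          (μH[(n : ℝ)] : Measure (Sph n)) (Metric.closedBall x (2 * (1 / 2) ^ k)) := by
        rw [lintegral_tsum fun k => (measurable_const.indicator
          Metric.isClosed_closedBall.measurableSet).aemeasurable]
        refine tsum_congr fun k => ?_
        rw [lintegral_indicator_const Metric.isClosed_closedBall.measurableSet]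
    _ ≤ ∑' k : ℕ, C * ENNReal.ofReal (2 ^ |a| * 2 ^ n) * ENNReal.ofReal ρ ^ k := by
        refine ENNReal.tsum_le_tsum fun k => ?_
        refine (mul_le_mul_right (hball x _ (by positivity)) _).trans (le_of_eq ?_)
        rw [← ENNReal.ofReal_pow hρ0, mul_assoc, mul_left_comm, ← ENNReal.ofReal_mul (by positivity),
          ← ENNReal.ofReal_mul (by positivity)]
        congr 2
        rw [hρ]; ring
    _ = _ := ENNReal.tsum_mul_left

lemma en_lip_finite (n : ℕ) {V : Type*} [NormedAddCommGroup V] (p a L : ℝ) (hp : 0 < p)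
    (hL : 0 ≤ L) (ha : a - p < n) (u : Sph n → V) (hu : ∀ x y, ‖u x - u y‖ ≤ L * dist x y) :
    en n p a u ≠ ∞ := by
  obtain ⟨C, hC, hk⟩ := kern_bound n (a - p) ha
  have : en n p a u ≤ ∫⁻ _x, ENNReal.ofReal (L ^ p) * C ∂(μH[(n : ℝ)] : Measure (Sph n)) := by
    refine lintegral_mono fun x => ?_
    refine le_trans ?_ (mul_le_mul_right (hk x) _)
    rw [← lintegral_const_mul' _ _ ENNReal.ofReal_ne_top]
    refine lintegral_mono fun y => ?_
    simp only
    rw [← ofReal_norm, ENNReal.ofReal_rpow_of_nonneg (norm_nonneg _) hp.le,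
      ← ENNReal.ofReal_mul (by positivity), ← ENNReal.ofReal_mul (by positivity)]
    refine ENNReal.ofReal_le_ofReal ?_
    rcases (dist_nonneg (x := x) (y := y)).eq_or_lt with h | h
    · have h0 : ‖u x - u y‖ = 0 := by
        refine le_antisymm ((hu x y).trans ?_) (norm_nonneg _)
        rw [← h]; simp
      rw [h0, Real.zero_rpow hp.ne', zero_mul]; positivity
    · calc _ ≤ (L * dist x y) ^ p * (dist x y ^ a)⁻¹ := by
            gcongr
            exact hu x y
        _ = _ := by
            rw [Real.mul_rpow hL h.le, Real.rpow_sub h]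
            field_simp
  refine ne_top_of_le_ne_top ?_ this
  rw [lintegral_const]
  exact ENNReal.mul_ne_top (ENNReal.mul_ne_top ENNReal.ofReal_ne_top hC) (measure_ne_top _ _)

lemma integrand_mono {n : ℕ} {V : Type*} [NormedAddCommGroup V] (p a b : ℝ) (hp : 0 < p)
    (hab : a ≤ b) (u : Sph n → V) (x y : Sph n) :
    ‖u x - u y‖ₑ ^ p * ENNReal.ofReal ((dist x y ^ a)⁻¹) ≤
      ENNReal.ofReal (2 ^ (b - a)) * (‖u x - u y‖ₑ ^ p * ENNReal.ofReal ((dist x y ^ b)⁻¹)) := by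
  rcases (dist_nonneg (x := x) (y := y)).eq_or_lt with h | h
  · rw [dist_eq_zero.1 h.symm]
    simp [hp]
  · rw [mul_left_comm, ← ENNReal.ofReal_mul (by positivity)]
    gcongr
    calc (dist x y ^ a)⁻¹ = dist x y ^ (b - a) * (dist x y ^ b)⁻¹ := by
          rw [Real.rpow_sub h]; field_simp
      _ ≤ _ := by
          have := dist_le_two x y
          have := sub_nonneg.2 hab
          gcongr

lemma en_mono (n : ℕ) {V : Type*} [NormedAddCommGroup V] (p a b : ℝ) (hp : 0 < p)
    (hab : a ≤ b) (u : Sph n → V) :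
    en n p a u ≤ ENNReal.ofReal (2 ^ (b - a)) * en n p b u := by
  unfold en
  rw [← lintegral_const_mul' _ _ ENNReal.ofReal_ne_top]
  refine lintegral_mono fun x => ?_
  rw [← lintegral_const_mul' _ _ ENNReal.ofReal_ne_top]
  exact lintegral_mono fun y => integrand_mono p a b hp hab u x y

lemma en_le_of_le (n : ℕ) {V W : Type*} [NormedAddCommGroup V] [NormedAddCommGroup W]
    (p a c : ℝ) (hp : 0 < p) (hc : 0 ≤ c) (u : Sph n → V) (w : Sph n → W)
    (h : ∀ x y, ‖u x - u y‖ ≤ c * ‖w x - w y‖) :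
    en n p a u ≤ ENNReal.ofReal (c ^ p) * en n p a w := by
  unfold en
  rw [← lintegral_const_mul' _ _ ENNReal.ofReal_ne_top]
  refine lintegral_mono fun x => ?_
  simp only
  rw [← lintegral_const_mul' _ _ ENNReal.ofReal_ne_top]
  refine lintegral_mono fun y => ?_
  simp only
  rw [← mul_assoc, ← ENNReal.ofReal_rpow_of_nonneg hc hp.le,
    ← ENNReal.mul_rpow_of_nonneg _ _ hp.le]
  gcongr
  rw [← ofReal_norm, ← ofReal_norm, ← ENNReal.ofReal_mul hc]
  exact ENNReal.ofReal_le_ofReal (h x y)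

lemma integrand_meas {n : ℕ} {V : Type*} [NormedAddCommGroup V] (p a : ℝ) (hp : 0 < p)
    (u : Sph n → V) (hu : Continuous u) : Measurable fun z : Sph n × Sph n =>
    ‖u z.1 - u z.2‖ₑ ^ p * ENNReal.ofReal ((dist z.1 z.2 ^ a)⁻¹) := by
  have h1 : Continuous fun z : Sph n × Sph n => ‖u z.1 - u z.2‖ₑ ^ p :=
    (ENNReal.continuous_rpow_const).comp (by fun_prop)
  have h2 : Measurable fun z : Sph n × Sph n => dist z.1 z.2 := continuous_dist.measurable
  exact h1.measurable.mul ((h2.pow_const a).inv.ennreal_ofReal)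

lemma en_prod (n : ℕ) {V : Type*} [NormedAddCommGroup V] (p a : ℝ) (hp : 0 < p)
    (u : Sph n → V) (hu : Continuous u) :
    en n p a u = ∫⁻ z, ‖u z.1 - u z.2‖ₑ ^ p * ENNReal.ofReal ((dist z.1 z.2 ^ a)⁻¹)
      ∂((μH[(n : ℝ)] : Measure (Sph n)).prod (μH[(n : ℝ)] : Measure (Sph n))) := by
  rw [lintegral_prod _ (integrand_meas p a hp u hu).aemeasurable]
  rfl

lemma en_tendsto (n : ℕ) {V : Type*} [NormedAddCommGroup V] (p a b : ℝ) (hp : 0 < p)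
    (hab : a < b) (u : Sph n → V) (hu : Continuous u) (hfin : en n p b u ≠ ∞) :
    Filter.Tendsto (fun c => en n p c u) (𝓝[>] a) (𝓝 (en n p a u)) := by
  simp only [en_prod n p _ hp u hu] at hfin ⊢
  refine tendsto_lintegral_filter_of_dominated_convergence
    (fun z => ENNReal.ofReal (2 ^ (b - a)) *
      (‖u z.1 - u z.2‖ₑ ^ p * ENNReal.ofReal ((dist z.1 z.2 ^ b)⁻¹))) ?_ ?_ ?_ ?_
  · exact Filter.Eventually.of_forall fun c => integrand_meas p c hp u hu
  · filter_upwards [Ioc_mem_nhdsGT hab] with c hc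
    refine Filter.Eventually.of_forall fun z => ?_
    refine (integrand_mono p c b hp hc.2 u z.1 z.2).trans ?_
    gcongr
    · norm_num
    · exact hc.1.le
  · rw [lintegral_const_mul' _ _ ENNReal.ofReal_ne_top]
    exact ENNReal.mul_ne_top ENNReal.ofReal_ne_top hfin
  · refine Filter.Eventually.of_forall fun z => ?_
    rcases (dist_nonneg (x := z.1) (y := z.2)).eq_or_lt with h | h
    · rw [dist_eq_zero.1 h.symm]
      simp [hp]
    · refine ENNReal.Tendsto.const_mul ?_ (Or.inr ?_)
      · refine ENNReal.tendsto_ofReal (Filter.Tendsto.inv₀ ?_ (by positivity))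
        exact ((Real.continuous_const_rpow h.ne').tendsto a).mono_left nhdsWithin_le_nhds
      · exact ENNReal.rpow_ne_top_of_nonneg hp.le enorm_ne_top

/-! ### Averaging over the orthogonal group -/

/-- The orthogonal group. -/
abbrev OG (n : ℕ) : Type :=
  ↥(unitary (EuclideanSpace ℝ (Fin (n + 1)) →L[ℝ] EuclideanSpace ℝ (Fin (n + 1))))

/-- The operator underlying an orthogonal map. -/
abbrev OG.op {n : ℕ} (R : OG n) :
    EuclideanSpace ℝ (Fin (n + 1)) →L[ℝ] EuclideanSpace ℝ (Fin (n + 1)) := R.1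

lemma clm_continuousStar {E : Type*} [NormedAddCommGroup E] [InnerProductSpace ℝ E]
    [CompleteSpace E] : ContinuousStar (E →L[ℝ] E) := inferInstance

instance clm_cs (n : ℕ) : ContinuousStar
    (EuclideanSpace ℝ (Fin (n + 1)) →L[ℝ] EuclideanSpace ℝ (Fin (n + 1))) :=
  clm_continuousStar (E := EuclideanSpace ℝ (Fin (n + 1)))

lemma unitary_compact {E : Type*} [NormedAddCommGroup E] [InnerProductSpace ℝ E]
    [FiniteDimensional ℝ E] [CompleteSpace E] [Nontrivial E] :
    CompactSpace (unitary (E →L[ℝ] E)) := by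
  have : ProperSpace (E →L[ℝ] E) := FiniteDimensional.proper ℝ _
  have h : IsCompact {R : E →L[ℝ] E | R ∈ unitary (E →L[ℝ] E)} := by
    refine Metric.isCompact_of_isClosed_isBounded isClosed_unitary ?_
    refine (Metric.isBounded_closedBall (x := 0) (r := 1)).subset fun R hR => ?_
    rw [mem_closedBall_zero_iff]
    exact CStarRing.norm_of_mem_unitary hR |>.le
  exact isCompact_iff_compactSpace.1 h

instance OG_compact (n : ℕ) : CompactSpace (OG n) :=
  unitary_compact (E := EuclideanSpace ℝ (Fin (n + 1)))

instance OG_sc (n : ℕ) : SecondCountableTopology (OG n) := by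
  have : ProperSpace (EuclideanSpace ℝ (Fin (n + 1)) →L[ℝ] EuclideanSpace ℝ (Fin (n + 1))) :=
    FiniteDimensional.proper ℝ _
  infer_instance

instance OG_ms (n : ℕ) : MeasurableSpace (OG n) := borel _

instance OG_bs (n : ℕ) : BorelSpace (OG n) := ⟨rfl⟩

lemma OG.norm_op {n : ℕ} (R : OG n) (z : EuclideanSpace ℝ (Fin (n + 1))) : ‖R.op z‖ = ‖z‖ :=
  Unitary.norm_map R z

lemma OG.inv_op {n : ℕ} (R : OG n) (z : EuclideanSpace ℝ (Fin (n + 1))) :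
    R.op ((R⁻¹).op z) = z := by
  have : (R * R⁻¹).op z = z := by rw [mul_inv_cancel]; rfl
  exact this

/-- Action on the sphere. -/
def OG.act {n : ℕ} (R : OG n) (x : Sph n) : Sph n :=
  ⟨R.op x.1, by rw [mem_sphere_zero_iff_norm, R.norm_op, sph_norm]⟩

lemma OG.act_mul {n : ℕ} (R Q : OG n) (x : Sph n) : (R * Q).act x = R.act (Q.act x) := rfl

lemma OG.act_one {n : ℕ} (x : Sph n) : (1 : OG n).act x = x := rfl

lemma OG.dist_act {n : ℕ} (R : OG n) (x y : Sph n) : dist (R.act x) (R.act y) = dist x y := by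
  rw [Subtype.dist_eq, Subtype.dist_eq, dist_eq_norm, dist_eq_norm]
  change ‖R.op x.1 - R.op y.1‖ = _
  rw [← map_sub, R.norm_op]

/-- The isometry of the sphere given by an orthogonal map. -/
def OG.iso {n : ℕ} (R : OG n) : Sph n ≃ᵢ Sph n where
  toFun := R.act
  invFun := (R⁻¹).act
  left_inv x := by rw [← OG.act_mul, inv_mul_cancel, OG.act_one]
  right_inv x := by rw [← OG.act_mul, mul_inv_cancel, OG.act_one]
  isometry_toFun := Isometry.of_dist_eq R.dist_act

lemma OG.act_cont (n : ℕ) : Continuous fun z : OG n × Sph n => z.1.act z.2 := by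
  refine Continuous.subtype_mk ?_ _
  have h1 : Continuous fun z : OG n × Sph n => z.1.op := continuous_subtype_val.comp continuous_fst
  exact h1.clm_apply (by fun_prop)

lemma en_act (n : ℕ) {V : Type*} [NormedAddCommGroup V] (p a : ℝ) (u : Sph n → V) (R : OG n) :
    en n p a (fun x => u (R.act x)) = en n p a u := by
  unfold en
  have key : ∀ f : Sph n → ℝ≥0∞, ∫⁻ x, f (R.act x) ∂(μH[(n : ℝ)] : Measure (Sph n)) =
      ∫⁻ x, f x ∂(μH[(n : ℝ)] : Measure (Sph n)) := fun f =>
    (R.iso.measurePreserving_hausdorffMeasure (n : ℝ)).lintegral_comp_emb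
      R.iso.toHomeomorph.measurableEmbedding f
  conv_rhs => rw [← key]
  refine lintegral_congr fun x => ?_
  conv_rhs => rw [← key]
  simp only [OG.dist_act]

lemma exists_rot {n : ℕ} (x y : Sph n) (hxy : dist x y ≤ 1) :
    ∃ Q : OG n, Q.act x = y ∧ ‖Q.op - 1‖ ≤ 4 * dist x y := by
  have hx := sph_norm x
  have hy := sph_norm y
  rw [Subtype.dist_eq, dist_eq_norm] at hxy ⊢
  obtain ⟨x, hx'⟩ := x
  obtain ⟨y, hy'⟩ := y
  simp only at hx hy hxy ⊢
  have hN : 1 ≤ ‖x + y‖ := by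
    have h1 : ‖(2 : ℝ) • x‖ = 2 := by rw [norm_smul, hx]; norm_num
    have h2 : (2 : ℝ) • x = (x + y) + (x - y) := by rw [two_smul]; abel
    have := norm_add_le (x + y) (x - y)
    rw [← h2, h1] at this; linarith
  have hN0 : 0 < ‖x + y‖ := by linarith
  set a : EuclideanSpace ℝ (Fin (n + 1)) := ‖x + y‖⁻¹ • (x + y) with ha
  have han : ‖a‖ = 1 := by rw [ha, norm_smul, norm_inv, norm_norm, inv_mul_cancel₀ hN0.ne']
  have hab : ‖a - x‖ ≤ ‖x - y‖ := by
    have h1 : ‖(2 : ℝ) • x‖ = 2 := by rw [norm_smul, hx]; norm_num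
    have := normalize_lip (x + y) ((2 : ℝ) • x) 1 one_pos hN (by rw [h1]; norm_num)
    rw [h1, smul_smul, inv_mul_cancel₀ two_ne_zero, one_smul, inv_one, one_mul] at this
    refine this.trans (le_of_eq ?_)
    rw [two_smul, add_sub_add_left_eq_sub, norm_sub_rev]
  have hra : ∀ z, (ℝ ∙ a).reflection z = (2 * inner ℝ a z) • a - z := by
    intro z
    rw [Submodule.reflection_singleton_apply, han]
    simp [two_smul, two_mul, add_smul]
  have hrx : ∀ z, (ℝ ∙ x).reflection z = (2 * inner ℝ x z) • x - z := by
    intro z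
    rw [Submodule.reflection_singleton_apply, hx]
    simp [two_smul, two_mul, add_smul]
  let e := (ℝ ∙ x).reflection.trans (ℝ ∙ a).reflection
  have hQ : ∀ z, OG.op (Unitary.linearIsometryEquiv.symm e) z = (ℝ ∙ a).reflection ((ℝ ∙ x).reflection z) :=
    fun z => rfl
  refine ⟨Unitary.linearIsometryEquiv.symm e, ?_, ?_⟩
  · apply Subtype.ext
    change OG.op (Unitary.linearIsometryEquiv.symm e) x = y
    rw [hQ, hrx x, real_inner_self_eq_norm_sq, hx]
    have h0 : (2 * (1 : ℝ) ^ 2) • x - x = x := by rw [one_pow, mul_one, two_smul]; abel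
    rw [h0, hra, ha, inner_smul_left, inner_add_left, real_inner_self_eq_norm_sq, hx, smul_smul]
    have h1 := norm_add_sq_real x y
    rw [hx, hy, real_inner_comm] at h1
    have h2 : 2 * ((starRingEnd ℝ) ‖x + y‖⁻¹ * ((1 : ℝ) ^ 2 + inner ℝ y x)) * ‖x + y‖⁻¹ = 1 := by
      rw [conj_trivial]
      field_simp
      linarith
    rw [h2, one_smul]; abel
  · refine ContinuousLinearMap.opNorm_le_bound _ (by positivity) fun z => ?_
    rw [sub_apply, hQ]
    set z' := (ℝ ∙ x).reflection z with hz'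
    have hzz : (1 : EuclideanSpace ℝ (Fin (n + 1)) →L[ℝ] EuclideanSpace ℝ (Fin (n + 1))) z =
        (ℝ ∙ x).reflection z' := by rw [hz', Submodule.reflection_reflection]; rfl
    have hnz : ‖z'‖ = ‖z‖ := by rw [hz', LinearIsometryEquiv.norm_map]
    rw [hzz, hra, hrx, ← hnz]
    have h1 : (2 * inner ℝ a z') • a - z' - ((2 * inner ℝ x z') • x - z') =
        (2 * inner ℝ (a - x) z') • a + (2 * inner ℝ x z') • (a - x) := by
      rw [inner_sub_left, smul_sub, mul_sub, sub_smul]; abel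
    rw [h1]
    refine (norm_add_le _ _).trans ?_
    rw [norm_smul _ a, norm_smul _ (a - x), han, norm_mul, norm_mul]
    have h2 := norm_inner_le_norm (𝕜 := ℝ) (a - x) z'
    have h3 := norm_inner_le_norm (𝕜 := ℝ) x z'
    rw [hx] at h3
    have h4 : ‖(2 : ℝ)‖ = 2 := by norm_num
    rw [h4]
    have hz0 := norm_nonneg z'
    have ha0 := norm_nonneg (a - x)
    calc 2 * ‖inner ℝ (a - x) z'‖ * 1 + 2 * ‖inner ℝ x z'‖ * ‖a - x‖
        ≤ 2 * (‖a - x‖ * ‖z'‖) * 1 + 2 * (1 * ‖z'‖) * ‖a - x‖ := by gcongr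
      _ = 4 * ‖a - x‖ * ‖z'‖ := by ring
      _ ≤ 4 * ‖x - y‖ * ‖z'‖ := by gcongr

lemma jensen {Ω V : Type*} [MeasurableSpace Ω] [NormedAddCommGroup V] [NormedSpace ℝ V]
    (P : Measure Ω) [IsProbabilityMeasure P] (f : Ω → V) (hf : AEStronglyMeasurable f P) (p : ℝ)
    (hp : 1 ≤ p) : ‖∫ r, f r ∂P‖ₑ ^ p ≤ ∫⁻ r, ‖f r‖ₑ ^ p ∂P := by
  have h1 := enorm_integral_le_lintegral_enorm (μ := P) f
  have h2 := eLpNorm'_le_eLpNorm'_of_exponent_le one_pos hp P hf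
  have hp0 : 0 < p := by linarith
  rw [eLpNorm', eLpNorm'] at h2
  simp only [ENNReal.rpow_one, div_one] at h2
  calc _ ≤ ((∫⁻ r, ‖f r‖ₑ ^ p ∂P) ^ (1 / p)) ^ p := by
        gcongr
        exact h1.trans h2
    _ = _ := by rw [← ENNReal.rpow_mul, one_div, inv_mul_cancel₀ hp0.ne', ENNReal.rpow_one]

lemma exists_density (n : ℕ) (ε : ℝ) (hε : 0 < ε) : ∃ (f : OG n → ℝ) (L : ℝ), Continuous f ∧
    (∀ R, 0 ≤ f R) ∧ 0 ≤ L ∧ (∀ R, f R ≠ 0 → ‖R.op - 1‖ < ε) ∧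
    (∀ Q R : OG n, |f (Q * R) - f R| ≤ L * ‖Q.op - 1‖) ∧
    ∫ R, f R ∂(Measure.haar : Measure (OG n)) = 1 := by
  let ρ : OG n → ℝ := fun R => max 0 (ε - ‖R.op - 1‖)
  have hρc : Continuous ρ := by
    have : Continuous fun R : OG n => R.op := continuous_subtype_val
    fun_prop
  have hρ0 : ∀ R, 0 ≤ ρ R := fun R => le_max_left _ _
  have hZ : 0 < ∫ R, ρ R ∂(Measure.haar : Measure (OG n)) := by
    refine Continuous.integral_pos_of_hasCompactSupport_nonneg_nonzero hρc
      (HasCompactSupport.of_compactSpace ρ) hρ0 (x := 1) ?_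
    have : ρ 1 = ε := by
      simp only [ρ, OG.op]
      rw [OneMemClass.coe_one, sub_self, norm_zero, sub_zero, max_eq_right hε.le]
    rw [this]; exact hε.ne'
  set Z := ∫ R, ρ R ∂(Measure.haar : Measure (OG n)) with hZdef
  refine ⟨fun R => Z⁻¹ * ρ R, Z⁻¹, by fun_prop, fun R => mul_nonneg (by positivity) (hρ0 R),
    by positivity, ?_, ?_, ?_⟩
  · intro R hR
    by_contra h
    apply hR
    simp only [ρ]
    rw [max_eq_left (by linarith), mul_zero]
  · intro Q R
    rw [← mul_sub, abs_mul, abs_of_pos (inv_pos.2 hZ)]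
    refine mul_le_mul_of_nonneg_left ?_ (by positivity)
    simp only [ρ]
    refine (abs_max_sub_max_le_max _ _ _ _).trans ?_
    rw [sub_self, abs_zero, max_eq_right (abs_nonneg _)]
    have h1 : ε - ‖(Q * R).op - 1‖ - (ε - ‖R.op - 1‖) = ‖R.op - 1‖ - ‖(Q * R).op - 1‖ := by ring
    rw [h1]
    refine (abs_norm_sub_norm_le _ _).trans ?_
    have h2 : R.op - 1 - ((Q * R).op - 1) = -((Q.op - 1) * R.op) := by
      rw [sub_sub_sub_cancel_right, sub_mul, one_mul, neg_sub]; rfl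
    rw [h2, norm_neg]
    exact (CStarRing.norm_mul_coe_unitary (Q.op - 1) R).le
  · rw [integral_const_mul, ← hZdef, inv_mul_cancel₀ hZ.ne']

lemma mollify (n : ℕ) {V : Type*} [NormedAddCommGroup V] [NormedSpace ℝ V] [CompleteSpace V]
    (u : Sph n → V) (hu : Continuous u) (hu1 : ∀ x, ‖u x‖ ≤ 1)
    (δ : ℝ) (hδ : 0 < δ) : ∃ w : Sph n → V,
    (∃ L, 0 ≤ L ∧ ∀ x y, ‖w x - w y‖ ≤ L * dist x y) ∧ (∀ x, ‖w x - u x‖ ≤ δ) ∧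
    ∀ p a : ℝ, 1 ≤ p → en n p a w ≤ en n p a u := by
  have huc := CompactSpace.uniformContinuous_of_continuous hu
  obtain ⟨ε, hε, huε⟩ := Metric.uniformContinuous_iff.1 huc δ hδ
  obtain ⟨f, L, hfc, hf0, hL, hfs, hfL, hfi⟩ := exists_density n ε hε
  set H : Measure (OG n) := Measure.haar with hH
  let P : Measure (OG n) := H.withDensity fun R => ((f R).toNNReal : ℝ≥0∞)
  have hfm : Measurable fun R => (f R).toNNReal := hfc.measurable.real_toNNReal
  have hfint : Integrable f H := hfc.integrable_of_hasCompactSupport (HasCompactSupport.of_compactSpace f)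
  have hP : IsProbabilityMeasure P := by
    constructor
    simp only [P]
    rw [withDensity_apply _ MeasurableSet.univ, Measure.restrict_univ]
    change ∫⁻ R, ENNReal.ofReal (f R) ∂H = 1
    rw [← ofReal_integral_eq_lintegral_ofReal hfint (Filter.Eventually.of_forall hf0), hfi,
      ENNReal.ofReal_one]
  -- the orbit map
  have hact : ∀ x : Sph n, Continuous fun R : OG n => u ((R⁻¹).act x) := fun x =>
    hu.comp ((OG.act_cont n).comp (continuous_inv.prodMk continuous_const))
  have hact2 : Continuous fun z : (Sph n × Sph n) × OG n =>
      u ((z.2⁻¹).act z.1.1) - u ((z.2⁻¹).act z.1.2) := by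
    have h1 : Continuous fun z : (Sph n × Sph n) × OG n => (z.2⁻¹, z.1.1) :=
      (continuous_inv.comp continuous_snd).prodMk (by fun_prop)
    have h2 : Continuous fun z : (Sph n × Sph n) × OG n => (z.2⁻¹, z.1.2) :=
      (continuous_inv.comp continuous_snd).prodMk (by fun_prop)
    exact (hu.comp ((OG.act_cont n).comp h1)).sub (hu.comp ((OG.act_cont n).comp h2))
  have hcint : ∀ (μ : Measure (OG n)) [IsFiniteMeasure μ] (h : OG n → V), Continuous h →
      Integrable h μ := fun μ _ h hh =>
    hh.integrable_of_hasCompactSupport (HasCompactSupport.of_compactSpace h)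
  let w : Sph n → V := fun x => ∫ R, u ((R⁻¹).act x) ∂P
  have hw : ∀ x, w x = ∫ R, f R • u ((R⁻¹).act x) ∂H := by
    intro x
    simp only [w, P]
    rw [integral_withDensity_eq_integral_smul hfm]
    refine integral_congr_ae (Filter.Eventually.of_forall fun R => ?_)
    simp only [NNReal.smul_def]
    rw [Real.coe_toNNReal _ (hf0 R)]
  have hw1 : ∀ x, ‖w x‖ ≤ 1 := by
    intro x
    have := norm_integral_le_of_norm_le_const (μ := P) (f := fun R : OG n => u ((R⁻¹).act x)) (C := 1)
      (Filter.Eventually.of_forall fun R => hu1 _)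
    simpa using this
  have hrot : ∀ (Q : OG n) (x : Sph n), ‖w (Q.act x) - w x‖ ≤ L * ‖Q.op - 1‖ * H.real Set.univ := by
    intro Q x
    rw [hw, hw, ← integral_mul_left_eq_self (μ := H) (fun R : OG n => f R • u ((R⁻¹).act (Q.act x))) Q]
    have h1 : ∀ R : OG n, ((Q * R)⁻¹).act (Q.act x) = (R⁻¹).act x := by
      intro R
      rw [← OG.act_mul, mul_inv_rev, inv_mul_cancel_right]
    simp only [h1]
    have hc1 : Continuous fun R : OG n => f (Q * R) • u ((R⁻¹).act x) :=
      (hfc.comp (continuous_const.mul continuous_id)).smul (hact x)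
    have hc2 : Continuous fun R : OG n => f R • u ((R⁻¹).act x) := hfc.smul (hact x)
    rw [← integral_sub (hcint H _ hc1) (hcint H _ hc2)]
    refine norm_integral_le_of_norm_le_const (Filter.Eventually.of_forall fun R => ?_)
    rw [← sub_smul, norm_smul, Real.norm_eq_abs]
    calc _ ≤ (L * ‖Q.op - 1‖) * 1 :=
          mul_le_mul (hfL Q R) (hu1 _) (norm_nonneg _) (by positivity)
      _ = _ := mul_one _
  have hwlip : ∀ x y, ‖w x - w y‖ ≤ (2 + L * 4 * H.real Set.univ) * dist x y := by
    intro x y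
    have hM : 0 ≤ H.real Set.univ := measureReal_nonneg
    rcases le_total (dist x y) 1 with h | h
    · obtain ⟨Q, hQ1, hQ2⟩ := exists_rot x y h
      have h3 := hrot Q x
      rw [hQ1, norm_sub_rev] at h3
      refine h3.trans ?_
      calc L * ‖Q.op - 1‖ * H.real Set.univ ≤ L * (4 * dist x y) * H.real Set.univ := by gcongr
        _ ≤ _ := by nlinarith [dist_nonneg (x := x) (y := y)]
    · have h1 := (norm_sub_le (w x) (w y)).trans (add_le_add (hw1 x) (hw1 y))
      have : 0 ≤ L * 4 * H.real Set.univ := by positivity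
      nlinarith
  have hL' : 0 ≤ 2 + L * 4 * H.real Set.univ := by
    have hM : 0 ≤ H.real Set.univ := measureReal_nonneg
    positivity
  have hwc : Continuous w := by
    refine (LipschitzWith.of_dist_le_mul (K := ⟨_, hL'⟩) fun x y => ?_).continuous
    rw [dist_eq_norm]
    exact hwlip x y
  refine ⟨w, ⟨_, hL', hwlip⟩, ?_, ?_⟩
  · intro x
    have h1 : w x - u x = ∫ R, (u ((R⁻¹).act x) - u x) ∂P := by
      rw [integral_sub (hcint P _ (hact x)) (integrable_const _), integral_const]
      simp [w]
    rw [h1]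
    have h2 : ∀ᵐ R ∂P, ‖u ((R⁻¹).act x) - u x‖ ≤ δ := by
      simp only [P]
      rw [ae_withDensity_iff hfm.coe_nnreal_ennreal]
      refine Filter.Eventually.of_forall fun R hR => ?_
      have hR' : f R ≠ 0 := by
        intro h0; apply hR; simp [h0]
      rw [← dist_eq_norm]
      refine (huε ?_).le
      refine lt_of_le_of_lt ?_ (hfs R hR')
      rw [← R.dist_act, ← OG.act_mul, mul_inv_cancel, OG.act_one, dist_comm, Subtype.dist_eq,
        dist_eq_norm]
      have := (R.op - 1).le_opNorm x.1
      rw [sph_norm, mul_one] at this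
      exact this
    have := norm_integral_le_of_norm_le_const h2
    simpa using this
  · intro p a hp
    have hp0 : 0 < p := by linarith
    rw [en_prod n p a hp0 w hwc]
    have hGm : Measurable fun z : (Sph n × Sph n) × OG n =>
        ‖u ((z.2⁻¹).act z.1.1) - u ((z.2⁻¹).act z.1.2)‖ₑ ^ p *
          ENNReal.ofReal ((dist z.1.1 z.1.2 ^ a)⁻¹) := by
      have h1 : Measurable fun z : (Sph n × Sph n) × OG n =>
          ‖u ((z.2⁻¹).act z.1.1) - u ((z.2⁻¹).act z.1.2)‖ₑ ^ p :=
        ((ENNReal.continuous_rpow_const).comp hact2.enorm).measurable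
      have h2 : Measurable fun z : (Sph n × Sph n) × OG n => dist z.1.1 z.1.2 := by
        have : Continuous fun z : (Sph n × Sph n) × OG n => dist z.1.1 z.1.2 := by fun_prop
        exact this.measurable
      exact h1.mul ((h2.pow_const a).inv.ennreal_ofReal)
    calc _ ≤ ∫⁻ z : Sph n × Sph n, ∫⁻ R, ‖u ((R⁻¹).act z.1) - u ((R⁻¹).act z.2)‖ₑ ^ p *
          ENNReal.ofReal ((dist z.1 z.2 ^ a)⁻¹) ∂P
          ∂((μH[(n : ℝ)] : Measure (Sph n)).prod (μH[(n : ℝ)] : Measure (Sph n))) := by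
          refine lintegral_mono fun z => ?_
          simp only
          rw [lintegral_mul_const' _ _ ENNReal.ofReal_ne_top]
          gcongr
          have h1 : w z.1 - w z.2 = ∫ R, (u ((R⁻¹).act z.1) - u ((R⁻¹).act z.2)) ∂P := by
            rw [integral_sub (hcint P _ (hact _)) (hcint P _ (hact _))]
          rw [h1]
          exact jensen P _ (hcint P _ ((hact z.1).sub (hact z.2))).aestronglyMeasurable p hp
      _ = ∫⁻ R, ∫⁻ z : Sph n × Sph n, ‖u ((R⁻¹).act z.1) - u ((R⁻¹).act z.2)‖ₑ ^ p *
          ENNReal.ofReal ((dist z.1 z.2 ^ a)⁻¹)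
          ∂((μH[(n : ℝ)] : Measure (Sph n)).prod (μH[(n : ℝ)] : Measure (Sph n))) ∂P :=
          lintegral_lintegral_swap hGm.aemeasurable
      _ = ∫⁻ _R, en n p a u ∂P := by
          refine lintegral_congr fun R => ?_
          rw [← en_act n p a u R⁻¹]
          refine (en_prod n p a hp0 _ (hu.comp ?_)).symm
          exact (OG.act_cont n).comp (continuous_const.prodMk continuous_id)
      _ = en n p a u := by simp

/-! ### Approximation and conclusion -/

lemma approx (n m : ℕ) (v : Sph n → Sph m) (hv : Continuous v) (δ : ℝ) (hδ : 0 < δ)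
    (hδ1 : δ < 1) : ∃ w : Sph n → Sph m, Continuous w ∧ Homotopic w v ∧
    (∃ L, 0 ≤ L ∧ ∀ x y, ‖(w x).1 - (w y).1‖ ≤ L * dist x y) ∧
    ∀ p a : ℝ, 1 ≤ p → en n p a (fun x => (w x).1) ≤
      ENNReal.ofReal ((1 - δ)⁻¹ ^ p) * en n p a (fun x => (v x).1) := by
  obtain ⟨u, ⟨L, hL, hlip⟩, hclose, hen⟩ := mollify n (fun x => (v x).1)
    (continuous_subtype_val.comp hv) (fun x => (sph_norm _).le) δ hδ
  have huc : Continuous u := by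
    refine (LipschitzWith.of_dist_le_mul (K := ⟨_, hL⟩) fun x y => ?_).continuous
    rw [dist_eq_norm]
    exact hlip x y
  have hd : 0 < 1 - δ := by linarith
  have hline : ∀ (τ : unitInterval) (x : Sph n),
      1 - δ ≤ ‖(1 - (τ : ℝ)) • u x + (τ : ℝ) • (v x).1‖ := by
    intro τ x
    have h1 : (v x).1 = ((1 - (τ : ℝ)) • u x + (τ : ℝ) • (v x).1) - (1 - (τ : ℝ)) • (u x - (v x).1) := by
      rw [smul_sub, sub_smul 1 (τ : ℝ) (v x).1, one_smul]; abel
    have h2 := norm_sub_le ((1 - (τ : ℝ)) • u x + (τ : ℝ) • (v x).1) ((1 - (τ : ℝ)) • (u x - (v x).1))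
    rw [← h1, sph_norm, norm_smul, Real.norm_of_nonneg (sub_nonneg.2 τ.2.2)] at h2
    have h3 : (1 - (τ : ℝ)) * ‖u x - (v x).1‖ ≤ 1 * δ :=
      mul_le_mul (by linarith [τ.2.1]) (hclose x) (norm_nonneg _) zero_le_one
    linarith
  have hu0 : ∀ x, 1 - δ ≤ ‖u x‖ := by
    intro x
    have := hline 0 x
    simpa using this
  have hne : ∀ x, u x ≠ 0 := fun x => norm_pos_iff.1 (hd.trans_le (hu0 x))
  have hne' : ∀ (τ : unitInterval) (x : Sph n), (1 - (τ : ℝ)) • u x + (τ : ℝ) • (v x).1 ≠ 0 :=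
    fun τ x => norm_pos_iff.1 (hd.trans_le (hline τ x))
  have hdiff : ∀ x y, ‖(nrm (u x) (hne x)).1 - (nrm (u y) (hne y)).1‖ ≤ (1 - δ)⁻¹ * ‖u x - u y‖ :=
    fun x y => normalize_lip _ _ _ hd (hu0 x) (hu0 y)
  have hvc : Continuous fun x => (v x).1 := continuous_subtype_val.comp hv
  refine ⟨fun x => nrm (u x) (hne x), ?_, ?_, ?_, ?_⟩
  · refine Continuous.subtype_mk ?_ _
    exact (huc.norm.inv₀ fun x => norm_ne_zero_iff.2 (hne x)).smul huc
  · refine ⟨fun z => nrm _ (hne' z.1 z.2), ?_, ?_, ?_⟩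
    · refine Continuous.subtype_mk ?_ _
      have hc : Continuous fun z : unitInterval × Sph n =>
          (1 - (z.1 : ℝ)) • u z.2 + (z.1 : ℝ) • (v z.2).1 := by
        have h1 : Continuous fun z : unitInterval × Sph n => u z.2 := huc.comp continuous_snd
        have h2 : Continuous fun z : unitInterval × Sph n => (v z.2).1 := hvc.comp continuous_snd
        have h3 : Continuous fun z : unitInterval × Sph n => (z.1 : ℝ) :=
          continuous_subtype_val.comp continuous_fst
        exact ((continuous_const.sub h3).smul h1).add (h3.smul h2)
      exact (hc.norm.inv₀ fun z => norm_ne_zero_iff.2 (hne' z.1 z.2)).smul hc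
    · intro x
      apply Subtype.ext
      simp [nrm]
    · intro x
      apply Subtype.ext
      simp [nrm]
  · refine ⟨(1 - δ)⁻¹ * L, by positivity, fun x y => (hdiff x y).trans ?_⟩
    rw [mul_assoc]
    exact mul_le_mul_of_nonneg_left (hlip x y) (by positivity)
  · intro p a hp
    refine (en_le_of_le n p a (1 - δ)⁻¹ (by linarith) (by positivity) _ u hdiff).trans ?_
    exact mul_le_mul_right (hen p a hp) _

lemma homotopic_trans {X Y : Type*} [TopologicalSpace X] [TopologicalSpace Y] {f g h : X → Y}
    (hf : Continuous f) (hg : Continuous g) (hh : Continuous h)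
    (h1 : Homotopic f g) (h2 : Homotopic g h) : Homotopic f h := by
  obtain ⟨H, hH, hH0, hH1⟩ := h1
  obtain ⟨K, hK, hK0, hK1⟩ := h2
  let A : ContinuousMap.Homotopy (⟨f, hf⟩ : C(X, Y)) ⟨g, hg⟩ := ⟨⟨H, hH⟩, hH0, hH1⟩
  let B : ContinuousMap.Homotopy (⟨g, hg⟩ : C(X, Y)) ⟨h, hh⟩ := ⟨⟨K, hK⟩, hK0, hK1⟩
  exact ⟨A.trans B, (A.trans B).continuous, fun x => (A.trans B).apply_zero x,
    fun x => (A.trans B).apply_one x⟩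

/-- the infimum of the energy in a homotopy class is continuous from the right
at `t = s`, i.e. `m_s = lim_{t→s⁺} m_t`. -/
theorem stmt19 (n m : ℕ) (hn : 1 ≤ n) (hm : 1 ≤ m) (s : ℝ) (hs : 0 < s) (hs1 : s < 1)
    (g : Sph n → Sph m) (hg : Continuous g) :
    Filter.Tendsto (fun t => minEnergy n m s g t) (𝓝[>] s) (𝓝 (minEnergy n m s g s)) := by
  have hn' : (1 : ℝ) ≤ n := by exact_mod_cast hn
  set p : ℝ := (n : ℝ) / s with hp
  have hp1 : 1 ≤ p := by rw [hp, le_div_iff₀ hs]; linarith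
  have hp0 : 0 < p := by linarith
  refine tendsto_order.2 ⟨fun a ha => ?_, fun b hb => ?_⟩
  · -- lower bound
    have hlow : ∀ t, s < t → ENNReal.ofReal (2 ^ (-((t - s) * p))) * minEnergy n m s g s ≤
        minEnergy n m s g t := by
      intro t ht
      refine le_sInf ?_
      rintro e ⟨v, hvc, hvh, rfl⟩
      have h1 : minEnergy n m s g s ≤ sphEnergy n m s s v := sInf_le ⟨v, hvc, hvh, rfl⟩
      rw [sphEnergy_eq n m s _ hs] at h1 ⊢
      have h2 := en_mono n p ((n : ℝ) + s * p) ((n : ℝ) + t * p) hp0 (by nlinarith)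
        (fun x => (v x).1)
      refine (mul_le_mul_right (h1.trans h2) _).trans ?_
      rw [← mul_assoc, ← ENNReal.ofReal_mul (by positivity), ← Real.rpow_add (by norm_num)]
      have : -((t - s) * p) + ((n : ℝ) + t * p - ((n : ℝ) + s * p)) = 0 := by ring
      rw [this, Real.rpow_zero, ENNReal.ofReal_one, one_mul]
    have hlim : Filter.Tendsto (fun t => ENNReal.ofReal (2 ^ (-((t - s) * p))) *
        minEnergy n m s g s) (𝓝[>] s) (𝓝 (minEnergy n m s g s)) := by
      have h1 : Filter.Tendsto (fun t : ℝ => ENNReal.ofReal (2 ^ (-((t - s) * p)))) (𝓝[>] s)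
          (𝓝 1) := by
        have h2 : Continuous fun t : ℝ => (2 : ℝ) ^ (-((t - s) * p)) :=
          (Real.continuous_const_rpow two_ne_zero).comp (by fun_prop)
        have h3 := ENNReal.tendsto_ofReal ((h2.tendsto s).mono_left (nhdsWithin_le_nhds (s := Set.Ioi s)))
        simpa using h3
      have h4 := ENNReal.Tendsto.mul_const h1 (b := minEnergy n m s g s) (Or.inl one_ne_zero)
      simpa using h4
    filter_upwards [(tendsto_order.1 hlim).1 a ha, self_mem_nhdsWithin] with t ht1 ht2
    exact ht1.trans_le (hlow t ht2)
  · -- upper bound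
    obtain ⟨e, ⟨v, hvc, hvh, rfl⟩, hvb⟩ := sInf_lt_iff.1 hb
    rw [sphEnergy_eq n m s _ hs] at hvb
    -- choice of `δ`
    have hlim : Filter.Tendsto (fun δ : ℝ => ENNReal.ofReal ((1 - δ)⁻¹ ^ p) *
        en n p ((n : ℝ) + s * p) (fun x => (v x).1)) (𝓝[>] 0)
        (𝓝 (en n p ((n : ℝ) + s * p) (fun x => (v x).1))) := by
      have h1 : Filter.Tendsto (fun δ : ℝ => ENNReal.ofReal ((1 - δ)⁻¹ ^ p)) (𝓝[>] 0) (𝓝 1) := by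
        have h2 : ContinuousAt (fun δ : ℝ => (1 - δ)⁻¹ ^ p) 0 := by
          refine ContinuousAt.rpow_const ?_ (Or.inr hp0.le)
          exact ContinuousAt.inv₀ (by fun_prop) (by norm_num)
        have h3 := ENNReal.tendsto_ofReal (h2.tendsto.mono_left (nhdsWithin_le_nhds (s := Set.Ioi 0)))
        simpa using h3
      have h4 := ENNReal.Tendsto.mul_const h1
        (b := en n p ((n : ℝ) + s * p) (fun x => (v x).1)) (Or.inl one_ne_zero)
      simpa using h4
    obtain ⟨δ, hδb, hδ0, hδ1⟩ := (((tendsto_order.1 hlim).2 b hvb).and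
      (Ioo_mem_nhdsGT (zero_lt_one (α := ℝ)))).exists
    obtain ⟨w, hwc, hwh, ⟨L, hL, hlip⟩, hen⟩ := approx n m v hvc δ hδ0 hδ1
    have hwg : Homotopic w g := homotopic_trans hwc hvc hg hwh hvh
    have hwb := (hen p ((n : ℝ) + s * p) hp1).trans_lt hδb
    have hwc' : Continuous fun x => (w x).1 := continuous_subtype_val.comp hwc
    have ht0 : s < (s + 1) / 2 := by linarith
    have ht1 : (s + 1) / 2 < 1 := by linarith
    have hfin := en_lip_finite n p ((n : ℝ) + (s + 1) / 2 * p) L hp0 hL (by nlinarith)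
      (fun x => (w x).1) hlip
    have htend := en_tendsto n p ((n : ℝ) + s * p) ((n : ℝ) + (s + 1) / 2 * p) hp0 (by nlinarith)
      (fun x => (w x).1) hwc' hfin
    have hmap : Filter.Tendsto (fun t : ℝ => (n : ℝ) + t * p) (𝓝[>] s) (𝓝[>] ((n : ℝ) + s * p)) := by
      refine tendsto_nhdsWithin_iff.2 ⟨?_, ?_⟩
      · have : Continuous fun t : ℝ => (n : ℝ) + t * p := by fun_prop
        exact (this.tendsto s).mono_left nhdsWithin_le_nhds
      · filter_upwards [self_mem_nhdsWithin] with t ht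
        have : s < t := ht
        simp only [Set.mem_Ioi]
        nlinarith
    filter_upwards [(tendsto_order.1 (htend.comp hmap)).2 b hwb] with t ht
    refine lt_of_le_of_lt (sInf_le ⟨w, hwc, hwg, rfl⟩) ?_
    rw [sphEnergy_eq n m s _ hs]
    exact ht
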